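/- Let N = {n_1,…,n_s; n} be a scheme for distinct nodes X = {A_1,…,A_s} ⊂ ℝ² with n_1 ≥ n_2 ≥ ⋯ ≥ n_s ≥ 1, n_1 + n_2 ≤ n + 1, n_1 + ⋯ + n_s = 2n + 1 and s ≥ 5. Suppose all nodes of X lie on the conic given by an irreducible bivariate real polynomial β⁰ of degree 2, i.e. β⁰(A_k) = 0 for all k. Then every p ∈ Π_n satisfying D^{ij}p(A_k) = 0 for all i+j ≤ n_k−1 and all k = 1,…,s factors as p = β⁰·q with q ∈ Π_{n−2}. -/

import Mathlib

open MvPolynomial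

/-- `Dij i j p` is the partial derivative `D^{ij} p = ∂^{i+j} p / ∂x^i ∂y^j`. -/
noncomputable def Dij (i j : ℕ) (p : MvPolynomial (Fin 2) ℝ) : MvPolynomial (Fin 2) ℝ :=
  (fun q => pderiv (0 : Fin 2) q)^[i] ((fun q => pderiv (1 : Fin 2) q)^[j] p)

/-!
Fix a node `a` on the conic. The lines through `a` give a rational parametrization `x / w` of the
conic by polynomials of degree at most two, in which the parameter `t = ∞` is sent to `a`. On the
conic, a polynomial `p` of degree at most `n` becomes the univariate polynomial `w ^ n * p (x / w)`.
A zero of `p` of order `m` at a node other than `a` is an `m`-fold root of it, and a zero of order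
`m` at `a` lowers its degree from `2 * n` to `2 * n - m`. If the orders add up to more than `2 * n`,
this polynomial must vanish, so `p` and the equation of the conic have a common zero with a
transcendental coordinate. Elimination then shows that the irreducible equation divides `p`.
-/

open scoped Polynomial RatFunc

section Homogeneous

variable {σ R A : Type*} [CommSemiring R] [CommSemiring A] [Algebra R A]

theorem aeval_mul_left_of_isHomogeneous {p : MvPolynomial σ R} {n : ℕ} (hp : p.IsHomogeneous n)
    (c : A) (x : σ → A) : aeval (fun i => c * x i) p = c ^ n * aeval x p := by
  simp only [aeval_def, eval₂_eq, Finset.mul_sum]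
  refine Finset.sum_congr rfl fun m hm => ?_
  rw [hp.degree_eq_sum_deg_support hm, ← Finset.prod_pow_eq_pow_sum]
  simp only [mul_pow, Finset.prod_mul_distrib]
  ring

theorem pow_dvd_aeval_of_isHomogeneous {p : MvPolynomial σ R} {n : ℕ} (hp : p.IsHomogeneous n)
    {π : A} {x : σ → A} (hx : ∀ i, π ∣ x i) : π ^ n ∣ aeval x p := by
  choose y hy using hx
  rw [funext hy, aeval_mul_left_of_isHomogeneous hp]
  exact dvd_mul_right _ _

theorem sum_homogeneousComponent_of_totalDegree_le {p : MvPolynomial σ R} {n : ℕ}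
    (hp : p.totalDegree ≤ n) : ∑ k ∈ Finset.range (n + 1), homogeneousComponent k p = p := by
  conv_rhs => rw [← sum_homogeneousComponent p]
  have range_subset : Finset.range (p.totalDegree + 1) ⊆ Finset.range (n + 1) :=
    Finset.range_mono (Nat.succ_le_succ hp)
  refine (Finset.sum_subset range_subset fun k _ hk => ?_).symm
  exact homogeneousComponent_eq_zero k p (by grind)

theorem homogeneousComponent_one_eq_sum [Fintype σ] (p : MvPolynomial σ R) :
    homogeneousComponent 1 p = ∑ i, C (coeff (Finsupp.single i 1) p) * X i := by
  classical
  ext m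
  simp only [coeff_homogeneousComponent, coeff_sum, coeff_C_mul, coeff_X, mul_ite, mul_one,
    mul_zero]
  split_ifs with hm
  · obtain ⟨j, rfl⟩ := (Finsupp.sum_eq_one_iff m).1 hm
    simp [Finsupp.single_left_inj]
  · refine (Finset.sum_eq_zero fun i _ => if_neg ?_).symm
    rintro rfl
    simp at hm

end Homogeneous

section Taylor

variable {σ R A : Type*} [CommSemiring R] [CommSemiring A] [Algebra R A]

/-- The Taylor expansion `p(X + a)` of `p` at `a`; the multivariate analogue of
`Polynomial.taylor`. -/
noncomputable def mvTaylor (a : σ → R) : MvPolynomial σ R →ₐ[R] MvPolynomial σ R :=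
  aeval fun i => X i + C (a i)

theorem aeval_mvTaylor (a : σ → R) (x : σ → A) (p : MvPolynomial σ R) :
    aeval x (mvTaylor a p) = aeval (fun i => x i + algebraMap R A (a i)) p := by
  rw [mvTaylor, ← AlgHom.comp_apply, comp_aeval]
  simp [← algebraMap_eq]

theorem constantCoeff_mvTaylor (a : σ → R) (p : MvPolynomial σ R) :
    constantCoeff (mvTaylor a p) = eval a p := by
  simpa [← eval_zero, aeval_eq_eval] using! aeval_mvTaylor a (0 : σ → R) p

theorem totalDegree_mvTaylor_le (a : σ → R) (p : MvPolynomial σ R) :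
    (mvTaylor a p).totalDegree ≤ p.totalDegree := by
  have totalDegree_X_add_C_le (i : σ) : (X i + C (a i)).totalDegree ≤ 1 := by
    refine (totalDegree_add _ _).trans (max_le (isHomogeneous_X R i).totalDegree_le ?_)
    exact (totalDegree_C _).trans_le zero_le_one
  rw [mvTaylor, aeval_def, eval₂_eq]
  refine totalDegree_finsetSum_le fun m hm => (totalDegree_mul _ _).trans ?_
  rw [algebraMap_eq, totalDegree_C, zero_add]
  refine (totalDegree_finsetProd _ _).trans ((Finset.sum_le_sum fun i _ => ?_).trans
    (le_totalDegree hm))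
  exact (totalDegree_pow _ _).trans (mul_le_of_le_one_right' (totalDegree_X_add_C_le i))

theorem pderiv_mvTaylor (a : σ → R) (i : σ) (p : MvPolynomial σ R) :
    pderiv i (mvTaylor a p) = mvTaylor a (pderiv i p) := by
  classical
  induction p using MvPolynomial.induction_on with
  | C r => simp [mvTaylor]
  | add p q hp hq => simp [hp, hq]
  | mul_X p j hp =>
    have pderiv_mvTaylor_X : pderiv i (mvTaylor a (X j)) = mvTaylor a (pderiv i (X j)) := by
      by_cases h : j = i <;> simp [mvTaylor, pderiv_X, h]
    simp only [map_mul, pderiv_mul, map_add, hp, pderiv_mvTaylor_X]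

theorem coeff_iterate_pderiv (i : σ) (k : ℕ) (m : σ →₀ ℕ) (p : MvPolynomial σ R) :
    coeff m ((pderiv i)^[k] p) =
      coeff (m + Finsupp.single i k) p * (m i + k).descFactorial k := by
  induction k generalizing p with
  | zero => simp
  | succ k ih =>
    rw [Function.iterate_succ_apply, ih, coeff_pderiv, add_assoc, ← Finsupp.single_add,
      ← add_assoc, Nat.succ_descFactorial_succ]
    simp only [Finsupp.add_apply, Finsupp.single_eq_same]
    push_cast
    ring

/-- `a` is a zero of `p` of multiplicity at least `N`. Multiplicity is read off the Taylor
expansion at `a` rather than from partial derivatives, which makes it meaningful in every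
characteristic. -/
def VanishesToOrder (a : σ → R) (N : ℕ) (p : MvPolynomial σ R) : Prop :=
  ∀ k < N, homogeneousComponent k (mvTaylor a p) = 0

end Taylor

section Multiplicity

theorem VanishesToOrder.le_totalDegree {σ R : Type*} [CommRing R] {a : σ → R} {N : ℕ}
    {p : MvPolynomial σ R} (h : VanishesToOrder a N p) (hp : p ≠ 0) : N ≤ p.totalDegree := by
  by_contra! hlt
  have mvTaylor_eq_zero : mvTaylor a p = 0 := by
    rw [← sum_homogeneousComponent_of_totalDegree_le (totalDegree_mvTaylor_le a p)]
    exact Finset.sum_eq_zero fun k hk => h k (by grind)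
  have mvTaylor_neg_mvTaylor : mvTaylor (-a) (mvTaylor a p) = p := by
    rw [mvTaylor, aeval_mvTaylor]
    simp
  rw [← mvTaylor_neg_mvTaylor, mvTaylor_eq_zero, map_zero] at hp
  exact hp rfl

theorem eval_Dij (a : Fin 2 → ℝ) (i j : ℕ) (p : MvPolynomial (Fin 2) ℝ) :
    eval a (Dij i j p) =
      coeff (Finsupp.single 0 i + Finsupp.single 1 j) (mvTaylor a p) *
        (i.factorial * j.factorial) := by
  have mvTaylor_Dij : mvTaylor a (Dij i j p) = Dij i j (mvTaylor a p) := by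
    have semiconj (l : Fin 2) : Function.Semiconj (mvTaylor a) (pderiv l) (pderiv l) :=
      fun q => (pderiv_mvTaylor a l q).symm
    exact ((semiconj 0).iterate_right i _).trans (congrArg _ ((semiconj 1).iterate_right j p))
  rw [← constantCoeff_mvTaylor, mvTaylor_Dij, constantCoeff_eq, Dij, coeff_iterate_pderiv,
    coeff_iterate_pderiv]
  simp only [Finsupp.coe_zero, Pi.zero_apply, zero_add, ne_eq, one_ne_zero, not_false_eq_true,
    Finsupp.single_eq_of_ne, Nat.descFactorial_self]
  ring

theorem vanishesToOrder_of_Dij {a : Fin 2 → ℝ} {N : ℕ} {p : MvPolynomial (Fin 2) ℝ}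
    (h : ∀ i j, i + j + 1 ≤ N → eval a (Dij i j p) = 0) : VanishesToOrder a N p := by
  intro k hk
  ext m
  rw [coeff_homogeneousComponent, coeff_zero]
  refine ite_eq_right_iff.2 fun hm => ?_
  have eq_single_add_single : m = Finsupp.single 0 (m 0) + Finsupp.single 1 (m 1) := by
    ext l
    fin_cases l <;> simp
  have degree_eq : m 0 + m 1 = k := by
    rw [← hm, Finsupp.degree_eq_sum, Fin.sum_univ_two]
  have coeff_mul_eq_zero := h (m 0) (m 1) (by lia)
  rw [eval_Dij, ← eq_single_add_single] at coeff_mul_eq_zero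
  exact (mul_eq_zero.1 coeff_mul_eq_zero).resolve_right (by positivity)

end Multiplicity

section HomAeval

variable {σ R S : Type*}

/-- The value at `(w, x)` of the degree-`n` homogenization of `p`, i.e. `w ^ n * p (x / w)` with the
denominators cleared. The components of `p` of degree larger than `n` are dropped. -/
noncomputable def homAeval [CommSemiring R] [CommSemiring S] [Algebra R S] (n : ℕ) (x : σ → S)
    (w : S) (p : MvPolynomial σ R) : S :=
  ∑ k ∈ Finset.range (n + 1), aeval x (homogeneousComponent k p) * w ^ (n - k)

theorem algebraMap_homAeval [CommSemiring R] [CommSemiring S] [Algebra R S] {L : Type*} [Field L]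
    [Algebra R L] [Algebra S L] [IsScalarTower R S L] {n : ℕ} {p : MvPolynomial σ R}
    (hp : p.totalDegree ≤ n) (x : σ → S) {w : S} (hw : algebraMap S L w ≠ 0) :
    algebraMap S L (homAeval n x w p) =
      algebraMap S L w ^ n * aeval (fun i => algebraMap S L (x i) / algebraMap S L w) p := by
  conv_rhs => rw [← sum_homogeneousComponent_of_totalDegree_le hp, map_sum, Finset.mul_sum]
  rw [homAeval, map_sum]
  refine Finset.sum_congr rfl fun k hk => ?_
  have pow_eq : algebraMap S L w ^ n = algebraMap S L w ^ (n - k) * algebraMap S L w ^ k := by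
    rw [← pow_add, Nat.sub_add_cancel (by grind)]
  simp only [div_eq_inv_mul]
  rw [aeval_mul_left_of_isHomogeneous (homogeneousComponent_isHomogeneous k p), map_mul, map_pow,
    pow_eq, ← aeval_algebraMap_apply, inv_pow]
  simp only [Function.comp_def]
  field_simp

theorem homAeval_mvTaylor [CommRing R] [CommRing S] [IsDomain S] [Algebra R S] {n : ℕ}
    {p : MvPolynomial σ R} (hp : p.totalDegree ≤ n) (a : σ → R) (x : σ → S) {w : S} (hw : w ≠ 0) :
    homAeval n (fun i => x i - algebraMap R S (a i) * w) w (mvTaylor a p) = homAeval n x w p := by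
  let L := FractionRing S
  have algebraMap_w_ne_zero : algebraMap S L w ≠ 0 := by simpa using hw
  apply FaithfulSMul.algebraMap_injective S L
  rw [algebraMap_homAeval ((totalDegree_mvTaylor_le a p).trans hp) _ algebraMap_w_ne_zero,
    algebraMap_homAeval hp _ algebraMap_w_ne_zero, aeval_mvTaylor]
  congr! 4 with i
  rw [map_sub, map_mul, ← IsScalarTower.algebraMap_apply R S L, sub_div,
    mul_div_cancel_right₀ _ algebraMap_w_ne_zero, sub_add_cancel]

theorem VanishesToOrder.pow_dvd_homAeval [CommRing R] [CommRing S] [IsDomain S] [Algebra R S]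
    {a : σ → R} {N n : ℕ} {p : MvPolynomial σ R} (h : VanishesToOrder a N p)
    (hp : p.totalDegree ≤ n) {x : σ → S} {w π : S} (hw : w ≠ 0)
    (hπ : ∀ i, π ∣ x i - algebraMap R S (a i) * w) : π ^ N ∣ homAeval n x w p := by
  rw [← homAeval_mvTaylor hp a x hw]
  refine Finset.dvd_sum fun k _ => Dvd.dvd.mul_right ?_ _
  rcases lt_or_ge k N with hk | hk
  · simp [h k hk]
  · exact (pow_dvd_pow π hk).trans
      (pow_dvd_aeval_of_isHomogeneous (homogeneousComponent_isHomogeneous k _) hπ)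

/-- `x / w` tends to `a` as the parameter tends to infinity, hence vanishing at `a` lowers the
degree. -/
theorem VanishesToOrder.natDegree_homAeval_le [CommRing R] [IsDomain R] {a : σ → R} {N n : ℕ}
    {p : MvPolynomial σ R} (h : VanishesToOrder a N p) (hp : p.totalDegree ≤ n) {x : σ → R[X]}
    {w : R[X]} (hw : w ≠ 0) {d e : ℕ} (hw_deg : w.natDegree ≤ d + e)
    (hx : ∀ i, (x i - Polynomial.C (a i) * w).natDegree ≤ d) :
    (homAeval n x w p).natDegree ≤ n * (d + e) - N * e := by
  rw [← homAeval_mvTaylor hp a x hw]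
  refine Polynomial.natDegree_sum_le_of_forall_le _ _ fun k hk => ?_
  rcases lt_or_ge k N with hkN | hkN
  · simp [h k hkN]
  have aeval_natDegree : (aeval (fun i => x i - algebraMap R R[X] (a i) * w)
      (homogeneousComponent k (mvTaylor a p))).natDegree ≤ k * d :=
    aeval_natDegree_le _ (homogeneousComponent_isHomogeneous k _).totalDegree_le _ hx
  have natDegree_pow : (w ^ (n - k)).natDegree ≤ (n - k) * (d + e) :=
    Polynomial.natDegree_pow_le_of_le _ hw_deg
  obtain ⟨j, rfl⟩ := Nat.exists_eq_add_of_le (Finset.mem_range_succ_iff.1 hk)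
  have degree_add_order_le : k * d + j * (d + e) + N * e ≤ (k + j) * (d + e) := by
    nlinarith [Nat.mul_le_mul_right e hkN]
  rw [Nat.add_sub_cancel_left] at natDegree_pow ⊢
  exact (Polynomial.natDegree_mul_le_of_le aeval_natDegree natDegree_pow).trans
    (Nat.le_sub_of_add_le degree_add_order_le)

end HomAeval

section CommonZeros

theorem resultant_ne_zero_of_irreducible {R : Type*} [CommRing R] [IsDomain R]
    [UniqueFactorizationMonoid R] {F P : R[X]} (hF : Irreducible F) (hF_deg : F.natDegree ≠ 0)
    (hFP : ¬ F ∣ P) : Polynomial.resultant F P ≠ 0 := by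
  have algebraMap_injective := FaithfulSMul.algebraMap_injective R (FractionRing R)
  have primitive := hF.isPrimitive hF_deg
  have irreducible_map := primitive.irreducible_iff_irreducible_map_fraction_map
    (K := FractionRing R) |>.1 hF
  have not_dvd_map := fun h => hFP <|
    primitive.dvd_of_fraction_map_dvd_fraction_map (K := FractionRing R) h
  rw [← (map_ne_zero_iff _ algebraMap_injective), ← Polynomial.resultant_map_map,
    ← Polynomial.natDegree_map_eq_of_injective algebraMap_injective F,
    ← Polynomial.natDegree_map_eq_of_injective algebraMap_injective P, Ne,
    Polynomial.resultant_eq_zero_iff]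
  exact fun h => h.2 (irreducible_map.coprime_iff_not_dvd.2 not_dvd_map)

theorem dvd_of_eval₂_eq_zero {R L : Type*} [CommRing R] [IsDomain R]
    [UniqueFactorizationMonoid R] [CommRing L] {F P : R[X]} (hF : Irreducible F)
    {φ : R →+* L} (hφ : Function.Injective φ) {z : L} (hzF : F.eval₂ φ z = 0)
    (hzP : P.eval₂ φ z = 0) : F ∣ P := by
  have natDegree_ne_zero : F.natDegree ≠ 0 := by
    intro h
    obtain ⟨r, rfl⟩ := Polynomial.natDegree_eq_zero.1 h
    rw [Polynomial.eval₂_C, map_eq_zero_iff φ hφ] at hzF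
    simp [hzF] at hF
  by_contra not_dvd
  obtain ⟨u, v, -, -, bezout⟩ := Polynomial.exists_mul_add_mul_eq_C_resultant F P le_rfl le_rfl
    (.inl natDegree_ne_zero)
  have map_resultant_eq_zero : φ (F.resultant P) = 0 := by
    rw [← Polynomial.eval₂_C φ z, ← bezout, Polynomial.eval₂_add, Polynomial.eval₂_mul,
      Polynomial.eval₂_mul, hzF, hzP, zero_mul, zero_mul, add_zero]
  exact resultant_ne_zero_of_irreducible hF natDegree_ne_zero not_dvd
    ((map_eq_zero_iff φ hφ).1 map_resultant_eq_zero)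

theorem dvd_of_aeval_eq_zero {K ι L : Type*} [Field K] [CommRing L] [Algebra K L]
    {f p : MvPolynomial ι K} (hf : Irreducible f) {z : ι → L} {i : ι}
    (hz : AlgebraicIndependent K fun j : {j // j ≠ i} => z j)
    (hzf : aeval z f = 0) (hzp : aeval z p = 0) : f ∣ p := by
  classical
  let e := (renameEquiv K (Equiv.optionSubtypeNe i).symm).trans
    (optionEquivLeft K {j // j ≠ i})
  have eval₂_eq (g : MvPolynomial ι K) : (e g).eval₂
      (aeval fun j : {j // j ≠ i} => z j : MvPolynomial {j // j ≠ i} K →ₐ[K] L).toRingHom (z i)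
      = aeval z g := by
    induction g using MvPolynomial.induction_on with
    | C r => simp [e]
    | add g h hg hh => simp only [map_add, Polynomial.eval₂_add, hg, hh]
    | mul_X g j hg =>
      rw [map_mul, Polynomial.eval₂_mul, hg, map_mul]
      rcases eq_or_ne j i with rfl | hj
      · simp [e]
      · simp [e, Equiv.optionSubtypeNe_symm_of_ne hj]
  rw [← map_dvd_iff e]
  exact dvd_of_eval₂_eq_zero ((MulEquiv.irreducible_iff e).2 hf) hz
    ((eval₂_eq f).trans hzf) ((eval₂_eq p).trans hzp)

theorem dvd_of_aeval_eq_zero_of_transcendental {K L : Type*} [Field K] [CommRing L]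
    [Algebra K L] {f p : MvPolynomial (Fin 2) K} (hf : Irreducible f) {z : Fin 2 → L} {j : Fin 2}
    (hz : Transcendental K (z j)) (hzf : aeval z f = 0) (hzp : aeval z p = 0) : f ∣ p := by
  have subsingleton : Subsingleton {k : Fin 2 // k ≠ j + 1} :=
    ⟨fun ⟨k, hk⟩ ⟨l, hl⟩ => Subtype.ext (by lia)⟩
  refine dvd_of_aeval_eq_zero hf (i := j + 1) ?_ hzf hzp
  exact (algebraicIndependent_singleton_iff (⟨j, by lia⟩ : {k : Fin 2 // k ≠ j + 1})).2 hz

end CommonZeros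

section Line

theorem aeval_line_ne_zero {K : Type*} [Field K] {f : MvPolynomial (Fin 2) K}
    (hf : Irreducible f) (hdeg : 1 < f.totalDegree) (a : Fin 2 → K) {v : Fin 2 → K}
    (hv : v ≠ 0) :
    aeval (fun i => Polynomial.C (v i) * Polynomial.X + Polynomial.C (a i) : Fin 2 → K[X]) f
      ≠ 0 := by
  intro aeval_eq_zero
  obtain ⟨j, hj⟩ := Function.ne_iff.1 hv
  have transcendental_coord : Transcendental K
      (Polynomial.C (v j) * Polynomial.X + Polynomial.C (a j)) := by
    refine Polynomial.transcendental _ (Polynomial.natDegree_linear hj ▸ one_ne_zero) ?_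
    rw [Polynomial.leadingCoeff_linear hj]
    exact mem_nonZeroDivisors_of_ne_zero hj
  let line : MvPolynomial (Fin 2) K :=
    C (v 1) * (X 0 - C (a 0)) - C (v 0) * (X 1 - C (a 1))
  have line_ne_zero : line ≠ 0 := by
    intro h
    have eval_line (x : Fin 2 → K) : v 1 * (x 0 - a 0) - v 0 * (x 1 - a 1) = 0 := by
      simpa [line] using congrArg (eval x) h
    have v_zero : v 0 = 0 := by simpa using eval_line ![a 0, a 1 + 1]
    have v_one : v 1 = 0 := by simpa using eval_line ![a 0 + 1, a 1]
    exact hv (funext (Fin.forall_fin_two.2 ⟨v_zero, v_one⟩))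
  have f_dvd_line : f ∣ line := by
    refine dvd_of_aeval_eq_zero_of_transcendental hf transcendental_coord aeval_eq_zero ?_
    simp only [map_sub, map_mul, algHom_C, Polynomial.algebraMap_eq, aeval_X, add_sub_cancel_right,
      line]
    ring
  have totalDegree_line_le : line.totalDegree ≤ 1 := by
    have totalDegree_le (r s : K) (i : Fin 2) :
        (C r * (X i - C s) : MvPolynomial (Fin 2) K).totalDegree ≤ 1 := by
      refine (totalDegree_mul _ _).trans ?_
      rw [totalDegree_C, zero_add]
      exact (totalDegree_sub_C_le _ _).trans (totalDegree_X _).le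
    exact (totalDegree_sub _ _).trans (max_le (totalDegree_le ..) (totalDegree_le ..))
  have totalDegree_f_le := totalDegree_le_of_dvd_of_isDomain f_dvd_line line_ne_zero
  lia

end Line

section Conic

variable {σ R : Type*} [Fintype σ] [CommSemiring R] {f : MvPolynomial σ R} {a : σ → R}

theorem exists_mvTaylor_eq_linear_add_quadratic (hf : f.totalDegree ≤ 2) (ha : eval a f = 0) :
    ∃ (l : σ → R) (q : MvPolynomial σ R), q.IsHomogeneous 2 ∧
      mvTaylor a f = ∑ i, C (l i) * X i + q := by
  refine ⟨fun i => coeff (Finsupp.single i 1) (mvTaylor a f),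
    homogeneousComponent 2 (mvTaylor a f), homogeneousComponent_isHomogeneous _ _, ?_⟩
  have component_zero : homogeneousComponent 0 (mvTaylor a f) = 0 := by
    rw [homogeneousComponent_zero, ← constantCoeff_eq, constantCoeff_mvTaylor, ha, C_0]
  conv_lhs => rw [← sum_homogeneousComponent_of_totalDegree_le
    ((totalDegree_mvTaylor_le a f).trans hf)]
  rw [Finset.sum_range_succ, Finset.sum_range_succ, Finset.sum_range_one, component_zero,
    zero_add, homogeneousComponent_one_eq_sum]

theorem aeval_mul_add_of_mvTaylor_eq {A : Type*} [CommSemiring A] [Algebra R A] {l : σ → R}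
    {q : MvPolynomial σ R} (hq : q.IsHomogeneous 2)
    (hf : mvTaylor a f = ∑ i, C (l i) * X i + q) (c : A) (x : σ → A) :
    aeval (fun i => c * x i + algebraMap R A (a i)) f =
      c * ∑ i, algebraMap R A (l i) * x i + c ^ 2 * aeval x q := by
  rw [← aeval_mvTaylor, hf, map_add, aeval_mul_left_of_isHomogeneous hq, map_sum, Finset.mul_sum]
  congr! 2 with i
  rw [map_mul, aeval_C, aeval_X]
  ring

/-- If the linear part vanished at `c - a`, the line through `a` and `c` would lie on the conic. -/
theorem linear_part_ne_zero_of_irreducible {K : Type*} [Field K] {f q : MvPolynomial (Fin 2) K}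
    (hirr : Irreducible f) (hdeg : 1 < f.totalDegree) {a l : Fin 2 → K} (hq : q.IsHomogeneous 2)
    (hf : mvTaylor a f = ∑ i, C (l i) * X i + q) {c : Fin 2 → K} (hc : eval c f = 0)
    (hca : c ≠ a) : ∑ i, l i * (c i - a i) ≠ 0 := by
  intro linear_eq_zero
  have quadratic_eq_zero : eval (c - a) q = 0 := by
    have eval_eq := aeval_mul_add_of_mvTaylor_eq hq hf (1 : K) (c - a)
    simpa [aeval_eq_eval, linear_eq_zero, hc] using eval_eq.symm
  refine aeval_line_ne_zero hirr hdeg a (sub_ne_zero.2 hca) ?_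
  have aeval_line := aeval_mul_add_of_mvTaylor_eq hq hf (Polynomial.X : K[X])
    (algebraMap K K[X] ∘ (c - a))
  have linear_eq_zero_in_polynomials :
      ∑ i, algebraMap K K[X] (l i) * (algebraMap K K[X] ∘ (c - a)) i = 0 := by
    simp only [Function.comp_apply, ← map_mul, ← map_sum, Pi.sub_apply, linear_eq_zero, map_zero]
  rw [aeval_algebraMap_apply, aeval_eq_eval, linear_eq_zero_in_polynomials] at aeval_line
  simpa [quadratic_eq_zero, mul_comm] using aeval_line

end Conic

section Parametrization

variable {K : Type*} [Field K]

theorem exists_sum_mul_eq_one {ι : Type*} [Fintype ι] {l v : ι → K} (h : ∑ i, l i * v i ≠ 0) :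
    ∃ e : ι → K, ∑ i, l i * e i = 1 := by
  refine ⟨fun i => v i / ∑ j, l j * v j, ?_⟩
  simp only [← mul_div_assoc, ← Finset.sum_div]
  exact div_self h

/-- The pencil of directions `e + t * (-l 1, l 0)` of the lines through a point, as polynomials
in the parameter `t`. If `l · e = 1`, these are the vectors `v` with `l · v = 1`. -/
noncomputable def pencil (l e : Fin 2 → K) (i : Fin 2) : K[X] :=
  Polynomial.C (![-l 1, l 0] i) * Polynomial.X + Polynomial.C (e i)

variable {l e : Fin 2 → K}

theorem sum_mul_pencil (hle : ∑ i, l i * e i = 1) :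
    ∑ i, Polynomial.C (l i) * pencil l e i = 1 := by
  have C_hle := congrArg Polynomial.C hle
  simp only [Fin.sum_univ_two, map_add, map_mul, map_one] at C_hle
  simp only [pencil, Fin.sum_univ_two, Matrix.cons_val_zero, Matrix.cons_val_one, map_neg]
  linear_combination C_hle

theorem wedge_pencil (hle : ∑ i, l i * e i = 1) :
    Polynomial.C (e 0) * pencil l e 1 - Polynomial.C (e 1) * pencil l e 0 = Polynomial.X := by
  have C_hle := congrArg Polynomial.C hle
  simp only [Fin.sum_univ_two, map_add, map_mul, map_one] at C_hle
  simp only [pencil, Matrix.cons_val_zero, Matrix.cons_val_one, map_neg]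
  linear_combination Polynomial.X * C_hle

theorem exists_eval_pencil_eq (hle : ∑ i, l i * e i = 1) {v : Fin 2 → K} {r : K} (hr : r ≠ 0)
    (hv : ∑ i, l i * v i = r) : ∃ τ, ∀ i, (pencil l e i).eval τ = r⁻¹ * v i := by
  rw [Fin.sum_univ_two] at hle hv
  refine ⟨r⁻¹ * (e 0 * v 1 - e 1 * v 0), Fin.forall_fin_two.2 ⟨?_, ?_⟩⟩ <;>
    simp only [pencil, Matrix.cons_val_zero, Matrix.cons_val_one, Polynomial.eval_add,
      Polynomial.eval_mul, Polynomial.eval_C, Polynomial.eval_X] <;>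
    field_simp
  · linear_combination v 0 * hle - e 0 * hv
  · linear_combination v 1 * hle - e 1 * hv

theorem exists_transcendental_pencil_div (hle : ∑ i, l i * e i = 1) {w : K⟮X⟯} (hw : w ≠ 0) :
    ∃ i, Transcendental K (algebraMap K[X] K⟮X⟯ (pencil l e i) / w) := by
  by_contra! all_algebraic
  let F := algebraicClosure K K⟮X⟯
  let y (i : Fin 2) : K⟮X⟯ := algebraMap K[X] K⟮X⟯ (pencil l e i) / w
  have smul_mem (r : K) (i : Fin 2) : RatFunc.C r * y i ∈ F :=
    F.mul_mem (F.algebraMap_mem r) (mem_algebraicClosure_iff.2 (not_not.1 (all_algebraic i)))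
  have sum_eq : ∑ i, RatFunc.C (l i) * y i = 1 / w := by
    have cast_sum := congrArg (algebraMap K[X] K⟮X⟯) (sum_mul_pencil hle)
    simp only [map_sum, map_mul, map_one, RatFunc.algebraMap_C] at cast_sum
    simp only [← cast_sum, Finset.sum_div, mul_div_assoc, y]
  have wedge_eq : RatFunc.C (e 0) * y 1 - RatFunc.C (e 1) * y 0 = RatFunc.X / w := by
    have cast_wedge := congrArg (algebraMap K[X] K⟮X⟯) (wedge_pencil hle)
    simp only [map_sub, map_mul, RatFunc.algebraMap_C, RatFunc.algebraMap_X] at cast_wedge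
    simp only [← cast_wedge, sub_div, mul_div_assoc, y]
  have X_eq : (RatFunc.X : K⟮X⟯) = RatFunc.X / w / (1 / w) := by field_simp
  refine RatFunc.transcendental_X (K := K) (mem_algebraicClosure_iff.1 (?_ : _ ∈ F))
  rw [X_eq, ← sum_eq, ← wedge_eq]
  exact F.div_mem (F.sub_mem (smul_mem _ _) (smul_mem _ _)) (F.sum_mem fun i _ => smul_mem _ _)

/-- A rational parametrization `t ↦ num t / den t` of the plane conic `f = 0` by the lines through
its point `a`. The degree bounds encode that the parameter `t = ∞` is sent to `a`, and
`exists_param` that every other point is the value at some finite parameter. -/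
structure ConicParametrization (f : MvPolynomial (Fin 2) K) (a : Fin 2 → K) where
  num : Fin 2 → K[X]
  den : K[X]
  den_ne_zero : den ≠ 0
  natDegree_den_le : den.natDegree ≤ 2
  natDegree_num_sub_le : ∀ i, (num i - Polynomial.C (a i) * den).natDegree ≤ 1
  aeval_eq_zero : aeval (fun i => algebraMap K[X] K⟮X⟯ (num i) / algebraMap K[X] K⟮X⟯ den) f = 0
  exists_transcendental :
    ∃ i, Transcendental K (algebraMap K[X] K⟮X⟯ (num i) / algebraMap K[X] K⟮X⟯ den)
  exists_param : ∀ c, eval c f = 0 → c ≠ a →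
    ∃ τ, den.eval τ ≠ 0 ∧ ∀ i, (num i).eval τ = c i * den.eval τ

section Construction

variable {f q : MvPolynomial (Fin 2) K} {a : Fin 2 → K}

theorem exists_eval_pencil_eq_of_eval_eq_zero (hle : ∑ i, l i * e i = 1) (hq : q.IsHomogeneous 2)
    (hf : mvTaylor a f = ∑ i, C (l i) * X i + q) {c : Fin 2 → K} (hc : eval c f = 0)
    (hlc : ∑ i, l i * (c i - a i) ≠ 0) :
    ∃ τ, (aeval (pencil l e) q).eval τ ≠ 0 ∧
      ∀ i, (pencil l e i).eval τ = (c i - a i) * -(aeval (pencil l e) q).eval τ := by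
  set r := ∑ i, l i * (c i - a i) with hr
  obtain ⟨τ, hτ⟩ := exists_eval_pencil_eq (v := c - a) hle hlc hr.symm
  have eval_quadratic : eval (c - a) q = -r := by
    have eval_eq := aeval_mul_add_of_mvTaylor_eq hq hf (1 : K) (c - a)
    simp only [Pi.sub_apply, one_mul, Algebra.algebraMap_self, RingHom.id_apply, sub_add_cancel,
      aeval_eq_eval, hc, ← hr, one_pow] at eval_eq
    linear_combination -eval_eq
  have eval_den : (aeval (pencil l e) q).eval τ = -r⁻¹ := by
    rw [← Polynomial.coe_aeval_eq_eval, comp_aeval_apply]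
    simp only [Polynomial.coe_aeval_eq_eval, hτ, aeval_mul_left_of_isHomogeneous hq]
    rw [aeval_eq_eval, eval_quadratic]
    field_simp
  refine ⟨τ, by simpa [eval_den] using hlc, fun i => ?_⟩
  rw [eval_den, hτ, neg_neg, mul_comm, Pi.sub_apply]

theorem aeval_pencil_div_eq_zero (hle : ∑ i, l i * e i = 1) (hq : q.IsHomogeneous 2)
    (hf : mvTaylor a f = ∑ i, C (l i) * X i + q) (h : aeval (pencil l e) q ≠ 0) :
    aeval (fun i => algebraMap K[X] K⟮X⟯ (pencil l e i) /
      algebraMap K[X] K⟮X⟯ (-aeval (pencil l e) q) + algebraMap K K⟮X⟯ (a i)) f = 0 := by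
  have algebraMap_ne_zero : algebraMap K[X] K⟮X⟯ (aeval (pencil l e) q) ≠ 0 :=
    (map_ne_zero_iff _ (RatFunc.algebraMap_injective K)).2 h
  have sum_mul_eq : ∑ i, algebraMap K K⟮X⟯ (l i) * algebraMap K[X] K⟮X⟯ (pencil l e i) = 1 := by
    simpa [RatFunc.algebraMap_eq_C] using congrArg (algebraMap K[X] K⟮X⟯) (sum_mul_pencil hle)
  simp only [div_eq_inv_mul]
  have aeval_cast_pencil : aeval (fun i => algebraMap K[X] K⟮X⟯ (pencil l e i)) q =
      algebraMap K[X] K⟮X⟯ (aeval (pencil l e) q) := aeval_algebraMap_apply K⟮X⟯ (pencil l e) q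
  rw [aeval_mul_add_of_mvTaylor_eq hq hf, sum_mul_eq, aeval_cast_pencil, map_neg]
  field_simp
  ring

end Construction

theorem nonempty_conicParametrization {f : MvPolynomial (Fin 2) K} (hirr : Irreducible f)
    (hdeg : f.totalDegree = 2) {a b : Fin 2 → K} (ha : eval a f = 0) (hb : eval b f = 0)
    (hba : b ≠ a) : Nonempty (ConicParametrization f a) := by
  obtain ⟨l, q, hq, hf⟩ := exists_mvTaylor_eq_linear_add_quadratic hdeg.le ha
  have linear_ne_zero {c : Fin 2 → K} (hc : eval c f = 0) (hca : c ≠ a) :=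
    linear_part_ne_zero_of_irreducible hirr (by lia) hq hf hc hca
  obtain ⟨e, hle⟩ := exists_sum_mul_eq_one (linear_ne_zero hb hba)
  have exists_param {c : Fin 2 → K} (hc : eval c f = 0) (hca : c ≠ a) :=
    exists_eval_pencil_eq_of_eval_eq_zero hle hq hf hc (linear_ne_zero hc hca)
  let w := -aeval (pencil l e) q
  have w_ne_zero : w ≠ 0 := by
    obtain ⟨τ, hτ, -⟩ := exists_param hb hba
    intro h
    simp [neg_eq_zero.1 h] at hτ
  have algebraMap_w_ne_zero : algebraMap K[X] K⟮X⟯ w ≠ 0 := by simpa using w_ne_zero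
  have point_eq (i : Fin 2) : algebraMap K[X] K⟮X⟯ (pencil l e i + Polynomial.C (a i) * w) /
      algebraMap K[X] K⟮X⟯ w =
      algebraMap K[X] K⟮X⟯ (pencil l e i) / algebraMap K[X] K⟮X⟯ w + algebraMap K K⟮X⟯ (a i) := by
    rw [map_add, map_mul, add_div, RatFunc.algebraMap_C, RatFunc.algebraMap_eq_C,
      mul_div_cancel_right₀ _ algebraMap_w_ne_zero]
  exact ⟨{
    num i := pencil l e i + Polynomial.C (a i) * w
    den := w
    den_ne_zero := w_ne_zero
    natDegree_den_le := by
      rw [Polynomial.natDegree_neg]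
      exact aeval_natDegree_le q hq.totalDegree_le _ fun i => Polynomial.natDegree_linear_le
    natDegree_num_sub_le i := by
      rw [add_sub_cancel_right]
      exact Polynomial.natDegree_linear_le
    aeval_eq_zero := by
      simp only [point_eq]
      exact aeval_pencil_div_eq_zero hle hq hf (neg_ne_zero.1 w_ne_zero)
    exists_transcendental := by
      obtain ⟨i, hi⟩ := exists_transcendental_pencil_div hle algebraMap_w_ne_zero
      refine ⟨i, fun h => hi ?_⟩
      simpa only [point_eq, add_sub_cancel_right] using h.sub (isAlgebraic_algebraMap (a i))
    exists_param c hc hca := by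
      obtain ⟨τ, hτ, hnum⟩ := exists_param hc hca
      refine ⟨τ, by simpa [w] using hτ, fun i => ?_⟩
      simp only [Polynomial.eval_add, Polynomial.eval_mul, Polynomial.eval_C, hnum, w,
        Polynomial.eval_neg]
      ring }⟩

end Parametrization

section Bezout

theorem sum_le_natDegree_of_pow_dvd {R ι : Type*} [CommRing R] [IsDomain R] [Fintype ι]
    {P : R[X]} (hP : P ≠ 0) {τ : ι → R} (hτ : Function.Injective τ) {m : ι → ℕ}
    (h : ∀ k, (Polynomial.X - Polynomial.C (τ k)) ^ m k ∣ P) : ∑ k, m k ≤ P.natDegree := by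
  classical
  calc ∑ k, m k ≤ ∑ k, P.roots.count (τ k) := Finset.sum_le_sum fun k _ => by
        rw [Polynomial.count_roots]
        exact (Polynomial.le_rootMultiplicity_iff hP).2 (h k)
    _ = ∑ x ∈ Finset.univ.map ⟨τ, hτ⟩, P.roots.count x := by simp
    _ ≤ ∑ x ∈ Finset.univ.map ⟨τ, hτ⟩ ∪ P.roots.toFinset, P.roots.count x :=
        Finset.sum_le_sum_of_subset Finset.subset_union_left
    _ = P.roots.card := Multiset.sum_count_eq_card fun x hx => by simp_all
    _ ≤ P.natDegree := P.card_roots'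

variable {K : Type*} [Field K] {f p : MvPolynomial (Fin 2) K} {n : ℕ}

theorem ConicParametrization.dvd_of_homAeval_eq_zero {a : Fin 2 → K}
    (φ : ConicParametrization f a) (hf : Irreducible f) (hp : p.totalDegree ≤ n)
    (h : homAeval n φ.num φ.den p = 0) : f ∣ p := by
  obtain ⟨i, hi⟩ := φ.exists_transcendental
  refine dvd_of_aeval_eq_zero_of_transcendental hf hi φ.aeval_eq_zero ?_
  have algebraMap_den_ne_zero : algebraMap K[X] K⟮X⟯ φ.den ≠ 0 := by simpa using φ.den_ne_zero
  have homAeval_eq := algebraMap_homAeval hp φ.num algebraMap_den_ne_zero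
  rw [h, map_zero, zero_eq_mul] at homAeval_eq
  exact homAeval_eq.resolve_left (pow_ne_zero _ algebraMap_den_ne_zero)

theorem ConicParametrization.dvd_of_vanishesToOrder {a : Fin 2 → K}
    (φ : ConicParametrization f a) (hf : Irreducible f) (hp : p.totalDegree ≤ n) {N : ℕ}
    (ha : VanishesToOrder a N p) {ι : Type*} [Fintype ι] {A : ι → Fin 2 → K}
    (hA : Function.Injective A) (hAa : ∀ k, A k ≠ a) (hon : ∀ k, eval (A k) f = 0) {μ : ι → ℕ}
    (hvan : ∀ k, VanishesToOrder (A k) (μ k) p) (hsum : 2 * n < N + ∑ k, μ k) : f ∣ p := by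
  rcases eq_or_ne p 0 with rfl | hp0
  · exact dvd_zero f
  choose τ den_ne_zero eval_num using fun k => φ.exists_param (A k) (hon k) (hAa k)
  have τ_injective : Function.Injective τ := fun k l hkl => hA <| funext fun i =>
    mul_right_cancel₀ (den_ne_zero k) <| by rw [← eval_num, hkl, eval_num]
  have pow_dvd (k : ι) : (Polynomial.X - Polynomial.C (τ k)) ^ μ k ∣ homAeval n φ.num φ.den p :=
    (hvan k).pow_dvd_homAeval hp φ.den_ne_zero fun i => by
      simp [Polynomial.dvd_iff_isRoot, eval_num]
  have natDegree_le : (homAeval n φ.num φ.den p).natDegree ≤ n * (1 + 1) - N * 1 :=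
    ha.natDegree_homAeval_le hp φ.den_ne_zero φ.natDegree_den_le φ.natDegree_num_sub_le
  refine φ.dvd_of_homAeval_eq_zero hf hp (by_contra fun hne => ?_)
  have sum_le := sum_le_natDegree_of_pow_dvd hne τ_injective pow_dvd
  have order_le := (ha.le_totalDegree hp0).trans hp
  lia

theorem dvd_of_vanishesToOrder_of_lt_sum (hf : Irreducible f) (hdeg : f.totalDegree = 2)
    (hp : p.totalDegree ≤ n) {ι : Type*} [Fintype ι] {A : ι → Fin 2 → K}
    (hA : Function.Injective A) (hon : ∀ k, eval (A k) f = 0) {μ : ι → ℕ}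
    (hvan : ∀ k, VanishesToOrder (A k) (μ k) p) (hsum : 2 * n < ∑ k, μ k) : f ∣ p := by
  classical
  rcases eq_or_ne p 0 with rfl | hp0
  · exact dvd_zero f
  have sum_le : ∑ k, μ k ≤ Fintype.card ι * n := by
    simpa using Finset.sum_le_card_nsmul Finset.univ μ n fun k _ =>
      ((hvan k).le_totalDegree hp0).trans hp
  have nontrivial : Nontrivial ι :=
    Fintype.one_lt_card_iff_nontrivial.1 (Nat.lt_of_mul_lt_mul_right (a := n) (by lia))
  obtain ⟨b, o, hbo⟩ := exists_pair_ne ι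
  obtain ⟨φ⟩ := nonempty_conicParametrization hf hdeg (hon o) (hon b) (hA.ne hbo)
  refine φ.dvd_of_vanishesToOrder hf hp (hvan o) (A := fun k : {k // k ≠ o} => A k)
    (hA.comp Subtype.val_injective) (fun k => hA.ne k.2) (fun k => hon k) (fun k => hvan k) ?_
  rwa [← Fintype.sum_eq_add_sum_subtype_ne]

end Bezout

theorem stmt_12_general {K ι : Type*} [Field K] [Fintype ι] {n : ℕ} {μ : ι → ℕ}
    (hsum : 2 * n < ∑ k, μ k) {A : ι → Fin 2 → K} (hA : Function.Injective A)
    {f : MvPolynomial (Fin 2) K} (hirr : Irreducible f) (hdeg : f.totalDegree = 2)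
    (hon : ∀ k, eval (A k) f = 0) {p : MvPolynomial (Fin 2) K} (hp : p.totalDegree ≤ n)
    (hvan : ∀ k, VanishesToOrder (A k) (μ k) p) :
    ∃ q : MvPolynomial (Fin 2) K, q.totalDegree ≤ n - 2 ∧ p = f * q := by
  obtain ⟨q, rfl⟩ := dvd_of_vanishesToOrder_of_lt_sum hirr hdeg hp hA hon hvan hsum
  refine ⟨q, ?_, rfl⟩
  rcases eq_or_ne q 0 with rfl | hq
  · simp
  rw [totalDegree_mul_of_isDomain hirr.ne_zero hq] at hp
  lia

theorem stmt_12 (n s : ℕ) (hs : 5 ≤ s) (nk : Fin s → ℕ)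
    (hpos : ∀ k, 1 ≤ nk k) (hdec : ∀ i j : Fin s, i ≤ j → nk j ≤ nk i)
    (h12 : nk ⟨0, by omega⟩ + nk ⟨1, by omega⟩ ≤ n + 1)
    (hsum : ∑ k, nk k = 2 * n + 1)
    (A : Fin s → Fin 2 → ℝ) (hA : Function.Injective A)
    (b0 : MvPolynomial (Fin 2) ℝ) (hirr : Irreducible b0) (hdeg : b0.totalDegree = 2)
    (hon : ∀ k, eval (A k) b0 = 0)
    (p : MvPolynomial (Fin 2) ℝ) (hp : p.totalDegree ≤ n)
    (hvan : ∀ (k : Fin s) (i j : ℕ), i + j + 1 ≤ nk k → eval (A k) (Dij i j p) = 0) :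
    ∃ q : MvPolynomial (Fin 2) ℝ, q.totalDegree ≤ n - 2 ∧ p = b0 * q :=
  stmt_12_general (by lia) hA hirr hdeg hon hp fun k => vanishesToOrder_of_Dij (hvan k)
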